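/- arXiv:1812.01143 — 7 statements merged into one kernel-verified Lean document; each statement's English description precedes it below -/
import Mathlib

section
/- For each k ∈ {0,...,N_w}, the vector (c_k(0),...,c_k(N_w)) is a right eigenvector of the Bernoulli–Laplace transition matrix T with eigenvalue λ_k = 1 − k(N+1−k)/(N1·N2); that is, for every i ∈ {0,...,N_w}, Σ_{j=0}^{N_w} T_{ij} c_k(j) = λ_k c_k(i). -/
/-!
Put `d = N2 - Nw`. The vector `c_k` lists the coefficients of
`(1 - x)^k * ₂F₁(k - N1, k - Nw; d + 1; x)`, a polynomial of degree at most `Nw`. Multiplying a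
power series by `1 - x` is a backward difference of its coefficient sequence, so `c_k` is, up to
sign, the `k`-fold difference of the hypergeometric coefficients `hypCoeff`, extended by zero to
negative indices (`cBL_eq_fwdDiff`).

If `F` solves the hypergeometric equation with parameters `A`, `B`, `d + 1`, then
`(1 - x)^s * F` solves
`(1 - x) * (x⁻¹ θ (θ + d) - (θ + A - s) (θ + B - s)) G + s (s + 1 + d - A - B) G = 0`, where
`θ = x * d/dx`: the exponents at `1` are shifted by `s` and those at infinity by `-s`. On
coefficients this is a three-term recurrence, obtained by induction on `s`
(`iter_fwdDiff_recurrence`). For `s = k`, `A = k - N1`, `B = k - Nw` it is exactly the eigenvalue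
equation for `T`; the truncation of `T` at `Nw` is harmless because `c_k(Nw + 1) = 0`.
-/

open Finset

noncomputable section

/-- Rising factorial (Pochhammer symbol) `a (a+1) ⋯ (a+m-1)` in `ℚ`. -/
def rfQ (a : ℚ) : ℕ → ℚ
  | 0 => 1
  | m + 1 => rfQ a m * (a + m)

/-- Components `c_k(i)` of the `k`-th right eigenvector of the BL transition matrix. -/
def cBL (N1 N2 Nw : ℕ) (k i : ℕ) : ℚ :=
  ∑ n ∈ Finset.range (min k i + 1),
    (Nat.choose k n : ℚ) * (-1) ^ n
      * rfQ ((k : ℚ) - N1) (i - n) * rfQ ((k : ℚ) - Nw) (i - n)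
      / (rfQ ((N2 : ℚ) - Nw + 1) (i - n) * (Nat.factorial (i - n) : ℚ))

/-- Up-transition probability `p_j` of the BL model. -/
def pBL (N1 N2 Nw : ℕ) (j : ℕ) : ℝ :=
  ((N1 : ℝ) - j) * ((Nw : ℝ) - j) / ((N1 : ℝ) * N2)

/-- Down-transition probability `q_j` of the BL model. -/
def qBL (N1 N2 Nb : ℕ) (j : ℕ) : ℝ :=
  (j : ℝ) * ((Nb : ℝ) - N1 + j) / ((N1 : ℝ) * N2)

/-- The Bernoulli–Laplace transition matrix `T`, `(T)_{ij} = Pr{n_w(m+1)=i | n_w(m)=j}`. -/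
def TBL (N1 N2 Nw Nb : ℕ) : Matrix (Fin (Nw + 1)) (Fin (Nw + 1)) ℝ :=
  fun i j =>
    if (i : ℕ) = (j : ℕ) + 1 then pBL N1 N2 Nw j
    else if (i : ℕ) + 1 = (j : ℕ) then qBL N1 N2 Nb j
    else if (i : ℕ) = (j : ℕ) then 1 - pBL N1 N2 Nw j - qBL N1 N2 Nb j
    else 0

/-- Eigenvalue `λ_k = 1 - k (N+1-k) / (N1 N2)`. -/
def lamBL (N1 N2 N : ℕ) (k : ℕ) : ℝ :=
  1 - (k : ℝ) * ((N : ℝ) + 1 - k) / ((N1 : ℝ) * N2)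


/-- Coefficient of `x ^ z` in `₂F₁(A, B; d + 1; x)`. The index is an integer, with value `0` at
negative `z`, so that recurrences need no boundary cases. -/
def hypCoeff (A B d : ℚ) (z : ℤ) : ℚ :=
  if 0 ≤ z then
    rfQ A z.toNat * rfQ B z.toNat / (rfQ (d + 1) z.toNat * (Nat.factorial z.toNat : ℚ))
  else 0

lemma hypCoeff_natCast (A B d : ℚ) (m : ℕ) :
    hypCoeff A B d m = rfQ A m * rfQ B m / (rfQ (d + 1) m * (Nat.factorial m : ℚ)) := by
  simp [hypCoeff]

lemma hypCoeff_neg (A B d : ℚ) {z : ℤ} (hz : z < 0) : hypCoeff A B d z = 0 := by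
  simp [hypCoeff, not_le.mpr hz]

lemma rfQ_pos {a : ℚ} (ha : 0 < a) (m : ℕ) : 0 < rfQ a m := by
  induction m with
  | zero => simp [rfQ]
  | succ m ih =>
    rw [rfQ]
    positivity

lemma rfQ_neg_natCast_eq_zero (t : ℕ) {m : ℕ} (h : t < m) : rfQ (-(t : ℚ)) m = 0 := by
  induction m with
  | zero => omega
  | succ m ih =>
    rw [rfQ]
    rcases Nat.lt_succ_iff_lt_or_eq.mp h with h | h
    · rw [ih h, zero_mul]
    · subst h
      simp

lemma hypCoeff_recurrence (A B d : ℚ) (hd : 0 ≤ d) (z : ℤ) :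
    ((z : ℚ) + 1) * (z + 1 + d) * hypCoeff A B d (z + 1)
      = (z + A) * (z + B) * hypCoeff A B d z := by
  rcases lt_trichotomy z (-1) with h | h | h
  · rw [hypCoeff_neg _ _ _ (by omega : z < 0), hypCoeff_neg _ _ _ (by omega : z + 1 < 0)]
    ring
  · subst h
    rw [hypCoeff_neg A B d (by norm_num : (-1 : ℤ) < 0)]
    norm_num
  · obtain ⟨m, rfl⟩ := Int.eq_ofNat_of_zero_le (by omega : 0 ≤ z)
    have e : ((m : ℤ) + 1) = ((m + 1 : ℕ) : ℤ) := by push_cast; ring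
    rw [e, hypCoeff_natCast, hypCoeff_natCast, rfQ, rfQ, rfQ, Nat.factorial_succ]
    have h1 := (rfQ_pos (by linarith : 0 < d + 1) m).ne'
    have h2 : (Nat.factorial m : ℚ) ≠ 0 := by positivity
    have h3 : d + 1 + (m : ℚ) ≠ 0 := by positivity
    have h4 : (m : ℚ) + 1 ≠ 0 := by positivity
    push_cast
    field_simp
    ring

/-- Coefficient form of the differential equation satisfied by `(1 - x)^s * ₂F₁(A, B; d + 1; x)`. -/
lemma iter_fwdDiff_recurrence (A B d : ℚ) (hd : 0 ≤ d) (s : ℕ) (z : ℤ) :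
    (z - 1 + A - s) * (z - 1 + B - s) * ((fwdDiff (-1 : ℤ))^[s] (hypCoeff A B d)) (z - 1)
      + (z + 1) * (z + 1 + d) * ((fwdDiff (-1 : ℤ))^[s] (hypCoeff A B d)) (z + 1)
      - ((z + A - s) * (z + B - s) + z * (z + d)) * ((fwdDiff (-1 : ℤ))^[s] (hypCoeff A B d)) z
      + s * (s + 1 + d - A - B) * ((fwdDiff (-1 : ℤ))^[s] (hypCoeff A B d)) z = 0 := by
  induction s generalizing z with
  | zero =>
    have h1 := hypCoeff_recurrence A B d hd z
    have h2 := hypCoeff_recurrence A B d hd (z - 1)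
    rw [sub_add_cancel] at h2
    push_cast at h2 ⊢
    simp only [Function.iterate_zero, id]
    linear_combination h1 - h2
  | succ s ih =>
    -- With `L_s` the operator of the recurrence for `s`, `L_{s+1} ((1 - x) G) = (1 - x) (L_s G)`.
    have h1 := ih z
    have h2 := ih (z - 1)
    rw [Function.iterate_succ_apply']
    simp only [fwdDiff]
    rw [show z + 1 + -1 = z by ring, ← sub_eq_add_neg, ← sub_eq_add_neg]
    rw [sub_add_cancel] at h2
    push_cast at h2 ⊢
    linear_combination h2 - h1

/-- `c_k` as a `k`-fold difference with step `-1`; the terms `n > i` missing from `cBL` are those with a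
negative index in `hypCoeff`. The sign arises because `fwdDiff (-1)` is the negative of multiplication
by `1 - x`. -/
lemma cBL_eq_fwdDiff (N1 N2 Nw k i : ℕ) :
    cBL N1 N2 Nw k i
      = (-1) ^ k * ((fwdDiff (-1 : ℤ))^[k]
          (hypCoeff ((k : ℚ) - N1) ((k : ℚ) - Nw) ((N2 : ℚ) - Nw))) i := by
  rw [fwdDiff_iter_eq_sum_shift, Finset.mul_sum, cBL]
  have hsub : range (min k i + 1) ⊆ range (k + 1) := by
    intro n
    simp only [mem_range]
    omega
  rw [← Finset.sum_subset hsub]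
  · refine Finset.sum_congr rfl fun n hn => ?_
    simp only [mem_range] at hn
    have e : (i : ℤ) + n • (-1 : ℤ) = ((i - n : ℕ) : ℤ) := by
      rw [Nat.cast_sub (by omega)]
      simp [sub_eq_add_neg]
    have hs : (-1 : ℚ) ^ k * (-1) ^ (k - n) = (-1) ^ n := by
      obtain ⟨t, rfl⟩ := Nat.exists_eq_add_of_le (by omega : n ≤ k)
      rw [Nat.add_sub_cancel_left, pow_add, mul_assoc, ← mul_pow]
      simp
    rw [e, hypCoeff_natCast, zsmul_eq_mul]
    push_cast
    rw [← hs]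
    ring
  · intro n hn hn'
    simp only [mem_range] at hn hn'
    have e : (i : ℤ) + n • (-1 : ℤ) < 0 := by
      simp only [nsmul_eq_mul]
      omega
    rw [hypCoeff_neg _ _ _ e]
    simp

/-- Every term contains a factor `(k - Nw)_m` with `m > Nw - k`, which vanishes. -/
lemma cBL_succ_eq_zero (N1 N2 Nw k : ℕ) (hk : k ≤ Nw) : cBL N1 N2 Nw k (Nw + 1) = 0 := by
  refine Finset.sum_eq_zero fun n hn => ?_
  simp only [mem_range] at hn
  have h := rfQ_neg_natCast_eq_zero (Nw - k) (by omega : Nw - k < Nw + 1 - n)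
  rw [Nat.cast_sub hk, neg_sub] at h
  rw [h]
  simp

theorem BL_right_eigenvectors
    (N1 N2 Nw Nb N : ℕ)
    (hN1 : 1 ≤ N1) (hN2 : 1 ≤ N2) (hN : N = N1 + N2) (hwb : Nw + Nb = N)
    (hw1 : Nw ≤ N1) (hw2 : Nw ≤ N2)
    (k : Fin (Nw + 1)) (i : Fin (Nw + 1)) :
    ∑ j : Fin (Nw + 1), TBL N1 N2 Nw Nb i j * ((cBL N1 N2 Nw k j : ℚ) : ℝ)
      = lamBL N1 N2 N k * ((cBL N1 N2 Nw k i : ℚ) : ℝ) := by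
  have hd : (0 : ℚ) ≤ (N2 : ℚ) - Nw := by
    rw [sub_nonneg]
    exact_mod_cast hw2
  have hNb : (Nb : ℝ) = N1 + N2 - Nw := by
    rw [eq_sub_iff_add_eq]
    exact_mod_cast (by omega : Nb + Nw = N1 + N2)
  have hN1' : (N1 : ℝ) ≠ 0 := by positivity
  have hN2' : (N2 : ℝ) ≠ 0 := by positivity
  obtain ⟨k, hk⟩ := k
  obtain ⟨i, hi⟩ := i
  have key := iter_fwdDiff_recurrence ((k : ℚ) - N1) ((k : ℚ) - Nw) ((N2 : ℚ) - Nw) hd k i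
  have hc := cBL_eq_fwdDiff N1 N2 Nw k
  have hlast := cBL_succ_eq_zero N1 N2 Nw k (by omega)
  -- In the last row the neighbour `i + 1` is outside the state space, but `c_k(Nw + 1) = 0`.
  have hup : (if i + 1 ∈ range (Nw + 1) then
        qBL N1 N2 Nb (i + 1) * ((cBL N1 N2 Nw k (i + 1) : ℚ) : ℝ) else 0)
      = qBL N1 N2 Nb (i + 1) * ((cBL N1 N2 Nw k (i + 1) : ℚ) : ℝ) := by
    split_ifs with h
    · rfl
    · have : i = Nw := by
        simp only [mem_range] at h
        omega
      simp [this, hlast]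
  have hdiag : i ∈ range (Nw + 1) := mem_range.mpr hi
  simp only [TBL]
  rw [Fin.sum_univ_eq_sum_range (fun j =>
    (if i = j + 1 then pBL N1 N2 Nw j
      else if i + 1 = j then qBL N1 N2 Nb j
      else if i = j then 1 - pBL N1 N2 Nw j - qBL N1 N2 Nb j
      else 0) * ((cBL N1 N2 Nw k j : ℚ) : ℝ)) (Nw + 1)]
  have hsplit : ∀ j : ℕ, (if i = j + 1 then pBL N1 N2 Nw j
      else if i + 1 = j then qBL N1 N2 Nb j
      else if i = j then 1 - pBL N1 N2 Nw j - qBL N1 N2 Nb j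
      else 0) * ((cBL N1 N2 Nw k j : ℚ) : ℝ)
      = (if i = j + 1 then pBL N1 N2 Nw j * ((cBL N1 N2 Nw k j : ℚ) : ℝ) else 0)
        + (if i + 1 = j then qBL N1 N2 Nb j * ((cBL N1 N2 Nw k j : ℚ) : ℝ) else 0)
        + (if i = j then (1 - pBL N1 N2 Nw j - qBL N1 N2 Nb j)
            * ((cBL N1 N2 Nw k j : ℚ) : ℝ) else 0) := by
    intro j
    split_ifs <;> first | omega | ring
  rw [Finset.sum_congr rfl fun j _ => hsplit j, Finset.sum_add_distrib, Finset.sum_add_distrib,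
    Finset.sum_ite_eq, Finset.sum_ite_eq, if_pos hdiag, hup]
  have hN' : (N : ℝ) = N1 + N2 := by
    rw [hN]
    push_cast
    ring
  rcases i with _ | i
  · have h0 : ((fwdDiff (-1 : ℤ))^[k]
        (hypCoeff ((k : ℚ) - N1) ((k : ℚ) - Nw) ((N2 : ℚ) - Nw))) (-1) = 0 := by
      rw [fwdDiff_iter_eq_sum_shift]
      refine Finset.sum_eq_zero fun n _ => ?_
      rw [hypCoeff_neg _ _ _ (by simp only [nsmul_eq_mul]; omega), smul_zero]
    have hrec : ((N2 : ℚ) - Nw + 1) * cBL N1 N2 Nw k 1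
        = (N1 * Nw - k * (N1 + N2 + 1 - k)) * cBL N1 N2 Nw k 0 := by
      rw [hc, hc]
      simp only [Nat.cast_zero, Int.cast_zero, zero_sub, zero_add, h0] at key
      push_cast
      linear_combination (-1) ^ k * key
    have hrec' := congrArg (fun x : ℚ => (x : ℝ)) hrec
    push_cast at hrec'
    simp only [pBL, qBL, lamBL, hNb, hN', Nat.cast_zero, zero_add]
    simp
    field_simp
    linear_combination hrec'
  · have hrec : ((N1 : ℚ) - i) * (Nw - i) * cBL N1 N2 Nw k i
        + (i + 2) * (i + 2 + N2 - Nw) * cBL N1 N2 Nw k (i + 1 + 1)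
        - ((N1 - i - 1) * (Nw - i - 1) + (i + 1) * (i + 1 + N2 - Nw)) * cBL N1 N2 Nw k (i + 1)
        + k * (N1 + N2 + 1 - k) * cBL N1 N2 Nw k (i + 1) = 0 := by
      rw [hc, hc, hc]
      push_cast at key ⊢
      rw [add_sub_cancel_right (i : ℤ) 1] at key
      linear_combination (-1) ^ k * key
    have hrec' := congrArg (fun x : ℚ => (x : ℝ)) hrec
    push_cast at hrec'
    simp only [add_left_inj]
    rw [Finset.sum_ite_eq, if_pos (mem_range.mpr (by omega))]
    simp only [pBL, qBL, lamBL, hNb, hN']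
    push_cast
    field_simp
    linear_combination hrec'
end
end

section
/- Fix k ∈ {0,...,N_w} and define b_i = (−1)^{i−k}(k−N1)_{i−k}(k−N_w)_{i−k}/((i−k)!·(2k−N)_{i−k}) for k ≤ i ≤ N_w and b_i = 0 for 0 ≤ i < k (the denominators are nonzero since i+k ≤ 2N_w ≤ N). Then for every i ∈ {0,...,N_w} (with b_{−1} interpreted as 0): N1·N2·(λ_k − 1)·b_i = (N1−i+1)(N_w−i+1)·b_{i−1} − (i(N_w−i) + (N_b+1)i)·b_i, where λ_k = 1 − k(N+1−k)/(N1·N2). In particular b is a right eigenvector with eigenvalue λ_k of the lower-triangular transformed matrix T′ whose only nonzero entries are T′_{i,i−1} = (N1−i+1)(N_w−i+1)/(N1N2) and T′_{i,i} = 1 − (i(N_w−i)+(N_b+1)i)/(N1N2). -/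
/-!
Since `Nw + Nb = N`, the coefficient `i (Nw - i) + (Nb + 1) i` equals `i (N + 1 - i)`, and
`i (N + 1 - i) - k (N + 1 - k) = (i - k) (N + 1 - i - k)`. The recursion is therefore the
two-term relation `(i - k) (N + 1 - i - k) b_i = (N1 - i + 1) (Nw - i + 1) b_{i-1}`. For `i ≤ k`
both sides vanish; for `i = k + m + 1` it is the term ratio of the hypergeometric coefficients
(`bBL_succ`), whose denominators are nonzero because `2 k + m < 2 Nw ≤ N` (`rfQ_ne_zero`).
Dividing by `N1 N2` turns the recursion into the rows of the eigenvector equation, each row of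
`T'` having only its diagonal and subdiagonal entries (`TBL'_mulVec`).
-/

open Finset

noncomputable section

/-- Components `b_i` of the `k`-th right eigenvector of the transformed (triangular)
matrix: `b_i = (-1)^{i-k} (k-N1)_{i-k} (k-Nw)_{i-k} / ((i-k)! (2k-N)_{i-k})` for
`k ≤ i`, and `b_i = 0` for `i < k`. -/
def bBL (N1 Nw N : ℕ) (k i : ℕ) : ℚ :=
  if i < k then 0
  else (-1) ^ (i - k) * rfQ ((k : ℚ) - N1) (i - k) * rfQ ((k : ℚ) - Nw) (i - k)
        / ((Nat.factorial (i - k) : ℚ) * rfQ (2 * (k : ℚ) - N) (i - k))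

/-- The transformed lower-triangular matrix `T'` with nonzero entries
`T'_{i,i-1} = (N1-i+1)(Nw-i+1)/(N1 N2)` and
`T'_{i,i} = 1 - (i(Nw-i) + (Nb+1) i)/(N1 N2)`. -/
def TBL' (N1 N2 Nw Nb : ℕ) : Matrix (Fin (Nw + 1)) (Fin (Nw + 1)) ℝ :=
  fun i j =>
    if (i : ℕ) = (j : ℕ) + 1 then
      ((N1 : ℝ) - i + 1) * ((Nw : ℝ) - i + 1) / ((N1 : ℝ) * N2)
    else if (i : ℕ) = (j : ℕ) then
      1 - ((i : ℝ) * ((Nw : ℝ) - i) + ((Nb : ℝ) + 1) * i) / ((N1 : ℝ) * N2)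
    else 0

/-- The rising factorial of `2 k - N` does not reach a zero factor while `2 k + m ≤ N`. -/
lemma rfQ_ne_zero (N k m : ℕ) (h : 2 * k + m ≤ N) : rfQ (2 * (k : ℚ) - N) m ≠ 0 := by
  induction m with
  | zero => simp [rfQ]
  | succ m ih =>
    refine mul_ne_zero (ih (by omega)) ?_
    have h' : 2 * (k : ℚ) + (m + 1) ≤ N := by exact_mod_cast h
    intro h0
    linarith

/-- Ratio of consecutive nonzero terms, cleared of denominators. -/
lemma bBL_succ (N1 Nw N k m : ℕ) (h : 2 * k + m + 1 ≤ N) :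
    ((m : ℚ) + 1) * ((N : ℚ) - 2 * k - m) * bBL N1 Nw N k (k + m + 1)
      = ((N1 : ℚ) - k - m) * ((Nw : ℚ) - k - m) * bBL N1 Nw N k (k + m) := by
  have h1 := rfQ_ne_zero N k m (by omega)
  have h2 : 2 * (k : ℚ) - N + m ≠ 0 := by
    have h' : 2 * (k : ℚ) + m + 1 ≤ N := by exact_mod_cast h
    intro h0
    linarith
  have h3 : (m.factorial : ℚ) ≠ 0 := by exact_mod_cast m.factorial_ne_zero
  have h4 : (m : ℚ) + 1 ≠ 0 := by positivity
  have e1 : k + m + 1 - k = m + 1 := by omega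
  have e2 : k + m - k = m := by omega
  have n1 : ¬ k + m + 1 < k := by omega
  have n2 : ¬ k + m < k := by omega
  simp only [bBL, if_neg n1, if_neg n2, e1, e2, rfQ, Nat.factorial_succ, pow_succ]
  push_cast
  field_simp
  ring

lemma bBL_of_lt (N1 Nw N : ℕ) {k i : ℕ} (h : i < k) : bBL N1 Nw N k i = 0 := if_pos h

lemma TBL'_mulVec (N1 N2 Nw Nb : ℕ) (f : ℕ → ℝ) (i : Fin (Nw + 1)) :
    (TBL' N1 N2 Nw Nb).mulVec (fun j => f j) i
      = ((N1 : ℝ) - (i : ℕ) + 1) * ((Nw : ℝ) - (i : ℕ) + 1) / ((N1 : ℝ) * N2)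
          * (if (i : ℕ) = 0 then 0 else f ((i : ℕ) - 1))
        + (1 - (((i : ℕ) : ℝ) * ((Nw : ℝ) - (i : ℕ)) + ((Nb : ℝ) + 1) * (i : ℕ))
            / ((N1 : ℝ) * N2)) * f i := by
  obtain ⟨i, hi⟩ := i
  have split : ∀ j : Fin (Nw + 1), TBL' N1 N2 Nw Nb ⟨i, hi⟩ j * f j
      = (if i = (j : ℕ) + 1 then
          ((N1 : ℝ) - i + 1) * ((Nw : ℝ) - i + 1) / ((N1 : ℝ) * N2) * f j else 0)
        + (if i = (j : ℕ) then
          (1 - ((i : ℝ) * ((Nw : ℝ) - i) + ((Nb : ℝ) + 1) * i) / ((N1 : ℝ) * N2)) * f j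
          else 0) := by
    intro j
    by_cases h1 : i = (j : ℕ) + 1
    · have h2 : i ≠ (j : ℕ) := by omega
      simp only [TBL', if_pos h1, if_neg h2, add_zero]
    · by_cases h2 : i = (j : ℕ)
      · simp only [TBL', if_neg h1, if_pos h2, zero_add]
      · simp only [TBL', if_neg h1, if_neg h2, zero_mul, add_zero]
  simp only [Matrix.mulVec, dotProduct, split, Finset.sum_add_distrib]
  congr 1
  · cases i with
    | zero => simp
    | succ p =>
      rw [Finset.sum_eq_single (⟨p, by omega⟩ : Fin (Nw + 1))]
      · simp
      · intro j _ hj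
        refine if_neg fun h => hj (Fin.ext ?_)
        simp only
        omega
      · simp
  · rw [Finset.sum_eq_single (⟨i, hi⟩ : Fin (Nw + 1))]
    · simp
    · intro j _ hj
      exact if_neg fun h => hj (Fin.ext h.symm)
    · simp

theorem BL_triangular_recursion
    (N1 N2 Nw Nb N : ℕ)
    (hN1 : 1 ≤ N1) (hN2 : 1 ≤ N2) (hN : N = N1 + N2) (hwb : Nw + Nb = N)
    (hw1 : Nw ≤ N1) (hw2 : Nw ≤ N2)
    (k : ℕ) (hk : k ≤ Nw) :
    (∀ i : ℕ, i ≤ Nw →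
      (N1 : ℝ) * N2 * (lamBL N1 N2 N k - 1) * ((bBL N1 Nw N k i : ℚ) : ℝ)
        = ((N1 : ℝ) - i + 1) * ((Nw : ℝ) - i + 1) *
            (if i = 0 then 0 else ((bBL N1 Nw N k (i - 1) : ℚ) : ℝ))
          - ((i : ℝ) * ((Nw : ℝ) - i) + ((Nb : ℝ) + 1) * i) * ((bBL N1 Nw N k i : ℚ) : ℝ))
    ∧ (TBL' N1 N2 Nw Nb).mulVec (fun i : Fin (Nw + 1) => ((bBL N1 Nw N k i : ℚ) : ℝ))
        = lamBL N1 N2 N k • (fun i : Fin (Nw + 1) => ((bBL N1 Nw N k i : ℚ) : ℝ)) := by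
  have hP : (N1 : ℝ) * N2 ≠ 0 := by
    have : N1 * N2 ≠ 0 := Nat.mul_ne_zero (by omega) (by omega)
    exact_mod_cast this
  have hNR : (Nb : ℝ) = N - Nw := by
    rw [← hwb]
    push_cast
    ring
  have hlam : (N1 : ℝ) * N2 * (lamBL N1 N2 N k - 1) = -((k : ℝ) * ((N : ℝ) + 1 - k)) := by
    rw [lamBL, sub_sub_cancel_left, mul_neg, mul_div_cancel₀ _ hP]
  have key : ∀ i : ℕ, i ≤ Nw →
      (N1 : ℝ) * N2 * (lamBL N1 N2 N k - 1) * ((bBL N1 Nw N k i : ℚ) : ℝ)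
        = ((N1 : ℝ) - i + 1) * ((Nw : ℝ) - i + 1) *
            (if i = 0 then 0 else ((bBL N1 Nw N k (i - 1) : ℚ) : ℝ))
          - ((i : ℝ) * ((Nw : ℝ) - i) + ((Nb : ℝ) + 1) * i)
            * ((bBL N1 Nw N k i : ℚ) : ℝ) := by
    intro i hi
    rw [hlam, hNR]
    rcases lt_or_ge k i with hki | hik
    · obtain ⟨m, rfl⟩ := Nat.exists_eq_add_of_lt hki
      have h := congrArg (fun q : ℚ => (q : ℝ)) (bBL_succ N1 Nw N k m (by omega))
      push_cast at h
      rw [if_neg (by omega), Nat.add_sub_cancel]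
      push_cast
      linear_combination h
    · have hprev : (if i = 0 then 0 else ((bBL N1 Nw N k (i - 1) : ℚ) : ℝ)) = 0 := by
        split_ifs with h0
        · rfl
        · rw [bBL_of_lt N1 Nw N (by omega), Rat.cast_zero]
      rw [hprev]
      rcases hik.lt_or_eq with hlt | rfl
      · simp [bBL_of_lt N1 Nw N hlt]
      · ring
  refine ⟨key, funext fun i => ?_⟩
  have h := key i (by omega)
  rw [TBL'_mulVec N1 N2 Nw Nb (fun j => ((bBL N1 Nw N k j : ℚ) : ℝ)) i, Pi.smul_apply,
    smul_eq_mul]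
  refine mul_left_cancel₀ hP ?_
  rw [mul_add, ← mul_assoc, mul_div_cancel₀ _ hP, ← mul_assoc, mul_sub, mul_div_cancel₀ _ hP]
  linear_combination -h
end
end

section
/- The hypergeometric distribution π given by π_i = C(N_w,i)·C(N−N_w, N1−i)/C(N,N1) for i ∈ {0,...,N_w} is a stationary distribution of the Bernoulli–Laplace transition matrix T: for every i ∈ {0,...,N_w}, Σ_{j=0}^{N_w} T_{ij} π_j = π_i. -/
/-!
The chain is reversible with respect to `π`: by `Nat.choose_succ_right_eq`, applied once to each
binomial factor, `p_j π_j = q_{j+1} π_{j+1}` (`pBL_mul_piBL`), so `T_{ij} π_j = T_{ji} π_i` for all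
`i, j` (`TBL_detailed_balance`). The columns of `T` sum to one (`TBL_column_sum`), because
`q_0 = 0` and `p_{Nw} = 0` prevent mass from leaving `{0, ..., Nw}`. Summing the detailed balance
relation over `j` gives stationarity.
-/

open Finset

noncomputable section

/-- The hypergeometric stationary distribution `π_i = C(Nw,i) C(N-Nw,N1-i) / C(N,N1)`. -/
def piBL (N1 Nw N : ℕ) (i : ℕ) : ℝ :=
  (Nat.choose Nw i : ℝ) * (Nat.choose (N - Nw) (N1 - i) : ℝ) / (Nat.choose N N1 : ℝ)

/-- Balance of the flow across the edge between `j` and `j + 1`. At `j = Nw` both sides vanish, so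
the truncated subtraction `N1 - (j + 1)` does no harm when `j = Nw = N1`. -/
theorem pBL_mul_piBL {N1 N2 Nw Nb N : ℕ} (hN : N = N1 + N2) (hwb : Nw + Nb = N)
    (hw1 : Nw ≤ N1) (hw2 : Nw ≤ N2) {j : ℕ} (hj : j ≤ Nw) :
    pBL N1 N2 Nw j * piBL N1 Nw N j = qBL N1 N2 Nb (j + 1) * piBL N1 Nw N (j + 1) := by
  have hNb : N - Nw = Nb := by omega
  unfold pBL qBL piBL
  rw [hNb]
  rcases hj.eq_or_lt with rfl | hlt
  · simp
  obtain ⟨k, rfl⟩ : ∃ k, N1 = j + 1 + k := ⟨N1 - (j + 1), by omega⟩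
  have h1 : (Nw.choose (j + 1) : ℝ) * (j + 1) = Nw.choose j * (Nw - j) := by
    have h := Nat.choose_succ_right_eq Nw j
    rw [← Nat.cast_sub hj]
    exact_mod_cast h
  have h2 : (Nb.choose (k + 1) : ℝ) * (k + 1) = Nb.choose k * (Nb - k) := by
    have h := Nat.choose_succ_right_eq Nb k
    rw [← Nat.cast_sub (show k ≤ Nb by omega)]
    exact_mod_cast h
  rw [show j + 1 + k - j = k + 1 by omega, show j + 1 + k - (j + 1) = k by omega]
  push_cast
  rw [div_mul_div_comm, div_mul_div_comm]
  congr 1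
  linear_combination (-(Nb.choose k : ℝ) * (Nb - k)) * h1 + ((Nw.choose j : ℝ) * (Nw - j)) * h2

/-- Reversibility of the Bernoulli–Laplace chain with respect to the hypergeometric weights. -/
theorem TBL_detailed_balance {N1 N2 Nw Nb N : ℕ} (hN : N = N1 + N2) (hwb : Nw + Nb = N)
    (hw1 : Nw ≤ N1) (hw2 : Nw ≤ N2) (i j : Fin (Nw + 1)) :
    TBL N1 N2 Nw Nb i j * piBL N1 Nw N j = TBL N1 N2 Nw Nb j i * piBL N1 Nw N i := by
  obtain ⟨i, hi⟩ := i
  obtain ⟨j, hj⟩ := j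
  simp only [TBL]
  by_cases h1 : i = j + 1
  · subst h1
    have h := pBL_mul_piBL hN hwb hw1 hw2 (show j ≤ Nw by omega)
    simpa [show ¬ j = j + 1 + 1 by omega] using h
  by_cases h2 : j = i + 1
  · subst h2
    have h := pBL_mul_piBL hN hwb hw1 hw2 (show i ≤ Nw by omega)
    simpa [show ¬ i = i + 1 + 1 by omega] using h.symm
  by_cases h3 : i = j
  · subst h3
    rfl
  simp [h1, h2, h3, Ne.symm h1, Ne.symm h2, Ne.symm h3]

theorem TBL_column_sum (N1 N2 Nw Nb : ℕ) (i : Fin (Nw + 1)) :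
    ∑ j : Fin (Nw + 1), TBL N1 N2 Nw Nb j i = 1 := by
  obtain ⟨i, hi⟩ := i
  have hsplit : ∀ j : Fin (Nw + 1), TBL N1 N2 Nw Nb j ⟨i, hi⟩ =
      (if (j : ℕ) = i + 1 then pBL N1 N2 Nw i else 0)
        + (if (j : ℕ) + 1 = i then qBL N1 N2 Nb i else 0)
        + (if (j : ℕ) = i then 1 - pBL N1 N2 Nw i - qBL N1 N2 Nb i else 0) := by
    intro j
    simp only [TBL]
    split_ifs <;> first | omega | simp
  have hp : ∑ j ∈ range (Nw + 1), (if j = i + 1 then pBL N1 N2 Nw i else 0)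
      = pBL N1 N2 Nw i := by
    rw [Finset.sum_ite_eq']
    split_ifs with h
    · rfl
    -- The target `i + 1` lies outside the state space only for `i = Nw`, where `p_i = 0`.
    · obtain rfl : i = Nw := by
        rw [mem_range] at h
        omega
      simp [pBL]
  have hq : ∑ j ∈ range (Nw + 1), (if j + 1 = i then qBL N1 N2 Nb i else 0)
      = qBL N1 N2 Nb i := by
    cases i with
    | zero => simp [qBL]
    | succ k =>
      simp only [Nat.add_right_cancel_iff]
      rw [Finset.sum_ite_eq', if_pos (mem_range.2 (by omega))]
  rw [Finset.sum_congr rfl (fun j _ => hsplit j), Fin.sum_univ_eq_sum_range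
      (fun j : ℕ => (if j = i + 1 then pBL N1 N2 Nw i else 0)
        + (if j + 1 = i then qBL N1 N2 Nb i else 0)
        + (if j = i then 1 - pBL N1 N2 Nw i - qBL N1 N2 Nb i else 0)),
    Finset.sum_add_distrib, Finset.sum_add_distrib, hp, hq, Finset.sum_ite_eq',
    if_pos (mem_range.2 hi)]
  ring

/-- The hypergeometric distribution is stationary for the BL chain. -/
theorem BL_stationary_distribution
    (N1 N2 Nw Nb N : ℕ)
    (hN1 : 1 ≤ N1) (hN2 : 1 ≤ N2) (hN : N = N1 + N2) (hwb : Nw + Nb = N)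
    (hw1 : Nw ≤ N1) (hw2 : Nw ≤ N2)
    (i : Fin (Nw + 1)) :
    ∑ j : Fin (Nw + 1), TBL N1 N2 Nw Nb i j * piBL N1 Nw N j = piBL N1 Nw N i := by
  rw [Finset.sum_congr rfl (fun j _ => TBL_detailed_balance hN hwb hw1 hw2 i j),
    ← Finset.sum_mul, TBL_column_sum, one_mul]
end
end

section
/- Equivalence of the matrix eigenproblem and the LPDO eigenproblem: let c = (c_0,...,c_{N_w}) be any real vector and λ ∈ ℝ, and let G be the polynomial G = Σ_{i=0}^{N_w} c_i·x^i·y^{N1−i}·z^{N_w−i} in ℝ[x,y,z]. Then T·c = λ·c if and only if (x−yz)·∂_y∂_z G + y(x−yz)·∂_x∂_y G − N_b·(x−yz)·∂_x G = N1·N2·(λ−1)·G as polynomials. -/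
/-!
The monomials `m_i = x^i y^(N1-i) z^(Nw-i)`, `0 ≤ i ≤ Nw`, are linearly independent, so `c ↦ G_c` is
an injective linear map (`GBL_injective`). The differential operator `L` on the left-hand side of the
polynomial equation is linear and acts tridiagonally on these monomials,
`L m_j = N1 N2 (p_j (m_{j+1} - m_j) + q_j (m_{j-1} - m_j))` (`lpdo_mono`), which is `N1 N2` times the
`j`-th column of `T - 1` read in the monomials (`sum_TBL_mono`). Hence
`L G_c = N1 N2 (G_{Tc} - G_c)` (`lpdo_GBL`), and `L G_c = N1 N2 (λ - 1) G_c` says exactly that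
`G_{Tc} = G_{λ c}`, that is, `T c = λ c`.
-/

open Finset MvPolynomial

noncomputable section

/-- The homogeneous polynomial `G = Σ_i c_i x^i y^{N1-i} z^{Nw-i}` encoding a vector `c`. -/
def GBL (N1 Nw : ℕ) (c : Fin (Nw + 1) → ℝ) : MvPolynomial (Fin 3) ℝ :=
  ∑ i : Fin (Nw + 1),
    MvPolynomial.C (c i) * X 0 ^ (i : ℕ) * X 1 ^ (N1 - (i : ℕ)) * X 2 ^ (Nw - (i : ℕ))

/-- The monomial `x^i y^(N1-i) z^(Nw-i)`, with truncated exponents; only `i ≤ Nw ≤ N1` matters. -/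
def monoBL (N1 Nw i : ℕ) : MvPolynomial (Fin 3) ℝ :=
  X 0 ^ i * X 1 ^ (N1 - i) * X 2 ^ (Nw - i)

/-- The operator `(x - yz) ∂_y ∂_z + y (x - yz) ∂_x ∂_y - N_b (x - yz) ∂_x` as a linear map. -/
def lpdo (Nb : ℕ) : MvPolynomial (Fin 3) ℝ →ₗ[ℝ] MvPolynomial (Fin 3) ℝ where
  toFun f := (X 0 - X 1 * X 2) * pderiv 1 (pderiv 2 f)
        + X 1 * (X 0 - X 1 * X 2) * pderiv 0 (pderiv 1 f)
        - MvPolynomial.C (Nb : ℝ) * (X 0 - X 1 * X 2) * pderiv 0 f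
  map_add' f g := by simp only [map_add]; ring
  map_smul' a f := by
    simp only [smul_eq_C_mul, pderiv_C_mul, RingHom.id_apply]
    ring

lemma GBL_eq_sum (N1 Nw : ℕ) (c : Fin (Nw + 1) → ℝ) :
    GBL N1 Nw c = ∑ i : Fin (Nw + 1), c i • monoBL N1 Nw i := by
  simp only [GBL, monoBL, smul_eq_C_mul, mul_assoc]

lemma monoBL_eq_monomial (N1 Nw i : ℕ) :
    monoBL N1 Nw i = monomial (Finsupp.single 0 i + Finsupp.single 1 (N1 - i)
      + Finsupp.single 2 (Nw - i)) 1 := by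
  simp only [monoBL, X_pow_eq_monomial, monomial_mul, one_mul]

/-- The exponent of `x` already separates the monomials, so each `c_j` is a coefficient of `G_c`. -/
lemma coeff_GBL (N1 Nw : ℕ) (c : Fin (Nw + 1) → ℝ) (j : Fin (Nw + 1)) :
    coeff (Finsupp.single 0 (j : ℕ) + Finsupp.single 1 (N1 - j) + Finsupp.single 2 (Nw - j))
      (GBL N1 Nw c) = c j := by
  rw [GBL_eq_sum, coeff_sum, Finset.sum_eq_single j]
  · simp [monoBL_eq_monomial]
  · intro i _ hij
    rw [monoBL_eq_monomial, coeff_smul, coeff_monomial, if_neg, smul_zero]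
    intro h
    have h0 := DFunLike.congr_fun h 0
    simp at h0
    exact hij (Fin.ext h0)
  · simp

lemma GBL_injective (N1 Nw : ℕ) : Function.Injective (GBL N1 Nw) := by
  intro c d h
  funext j
  rw [← coeff_GBL N1 Nw c j, h, coeff_GBL]

/-- The exponents `u - 1`, `v - 1`, `j - 1` truncate only where the coefficient vanishes. -/
lemma lpdo_X_pow (Nb j u v : ℕ) :
    lpdo Nb (X 0 ^ j * X 1 ^ u * X 2 ^ v) =
      ((u : ℝ) * v) • ((X 0 - X 1 * X 2) * (X 0 ^ j * X 1 ^ (u - 1) * X 2 ^ (v - 1)))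
      + ((j : ℝ) * ((u : ℝ) - Nb)) • ((X 0 - X 1 * X 2) * (X 0 ^ (j - 1) * X 1 ^ u * X 2 ^ v)) := by
  have hu : (X 1 : MvPolynomial (Fin 3) ℝ) * ((u : MvPolynomial (Fin 3) ℝ) * X 1 ^ (u - 1)) =
      (u : MvPolynomial (Fin 3) ℝ) * X 1 ^ u := by
    rcases u with _ | u
    · simp
    · rw [Nat.add_sub_cancel]; ring
  simp only [lpdo, LinearMap.coe_mk, AddHom.coe_mk]
  simp [smul_eq_C_mul, Derivation.leibniz, Derivation.leibniz_pow, pderiv_X]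
  linear_combination (X 0 - X 1 * X 2) * (j * X 0 ^ (j - 1) * X 2 ^ v) * hu

/-- For `j = 0` the truncated `j - 1` is harmless, because its coefficient `q_0` vanishes. Likewise
`m_{Nw+1}` only occurs with the vanishing coefficient `p_{Nw}`. -/
lemma lpdo_mono (N1 N2 Nw Nb j : ℕ) (hN1 : 1 ≤ N1) (hN2 : 1 ≤ N2) (hw1 : Nw ≤ N1) (hj : j ≤ Nw) :
    lpdo Nb (monoBL N1 Nw j) = ((N1 : ℝ) * N2) •
      (pBL N1 N2 Nw j • (monoBL N1 Nw (j + 1) - monoBL N1 Nw j)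
        + qBL N1 N2 Nb j • (monoBL N1 Nw (j - 1) - monoBL N1 Nw j)) := by
  have h1 : (N1 : ℝ) ≠ 0 := by positivity
  have h2 : (N2 : ℝ) ≠ 0 := by positivity
  have hp : (N1 : ℝ) * N2 * pBL N1 N2 Nw j = ((N1 : ℝ) - j) * ((Nw : ℝ) - j) := by
    unfold pBL; field_simp
  have hq : (N1 : ℝ) * N2 * qBL N1 N2 Nb j = (j : ℝ) * ((Nb : ℝ) - N1 + j) := by
    unfold qBL; field_simp
  rw [smul_add, smul_smul, smul_smul, hp, hq]
  obtain ⟨b, rfl⟩ := Nat.exists_eq_add_of_le hj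
  obtain ⟨a, rfl⟩ := Nat.exists_eq_add_of_le hw1
  have e1 : j + b + a - j = b + a := by omega
  have e2 : j + b - j = b := by omega
  have e3 : j + b + a - (j + 1) = b + a - 1 := by omega
  have e4 : j + b - (j + 1) = b - 1 := by omega
  have up : (((b + a : ℕ) : ℝ) * b) • ((X 0 - X 1 * X 2) *
      (X 0 ^ j * X 1 ^ (b + a - 1) * X 2 ^ (b - 1) : MvPolynomial (Fin 3) ℝ)) =
      (((b + a : ℕ) : ℝ) * b) •
        (monoBL (j + b + a) (j + b) (j + 1) - monoBL (j + b + a) (j + b) j) := by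
    rcases b with _ | b
    · simp
    · congr 1
      have e5 : b + 1 + a - 1 = b + a := by omega
      simp only [monoBL, e1, e2, e3, e4, e5, Nat.add_sub_cancel]
      ring
  have down : ((j : ℝ) * (((b + a : ℕ) : ℝ) - Nb)) • ((X 0 - X 1 * X 2) *
      (X 0 ^ (j - 1) * X 1 ^ (b + a) * X 2 ^ b : MvPolynomial (Fin 3) ℝ)) =
      ((j : ℝ) * (((b + a : ℕ) : ℝ) - Nb)) •
        (monoBL (j + b + a) (j + b) j - monoBL (j + b + a) (j + b) (j - 1)) := by
    rcases j with _ | j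
    · simp
    · congr 1
      have e5 : j + 1 + b + a - j = b + a + 1 := by omega
      have e6 : j + 1 + b - j = b + 1 := by omega
      simp only [monoBL, e1, e2, e5, e6, Nat.add_sub_cancel]
      ring
  conv_lhs => rw [monoBL, e1, e2, lpdo_X_pow, up, down]
  push_cast
  module

/-- Column `j` of `T`, read in the monomials. The out-of-range terms `m_{Nw+1}` and `m_{-1}` carry the
coefficients `p_{Nw} = 0` and `q_0 = 0`. -/
lemma sum_TBL_mono (N1 N2 Nw Nb : ℕ) (j : Fin (Nw + 1)) :
    ∑ i : Fin (Nw + 1), TBL N1 N2 Nw Nb i j • monoBL N1 Nw i =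
      monoBL N1 Nw j + (pBL N1 N2 Nw j • (monoBL N1 Nw (j + 1) - monoBL N1 Nw j)
        + qBL N1 N2 Nb j • (monoBL N1 Nw (j - 1) - monoBL N1 Nw j)) := by
  obtain ⟨j, hj⟩ := j
  have key : ∀ i : Fin (Nw + 1), TBL N1 N2 Nw Nb i ⟨j, hj⟩ • monoBL N1 Nw i =
      (fun i : ℕ => (if i = j + 1 then pBL N1 N2 Nw j • monoBL N1 Nw i else 0)
        + (if i + 1 = j then qBL N1 N2 Nb j • monoBL N1 Nw i else 0)
        + (if i = j then (1 - pBL N1 N2 Nw j - qBL N1 N2 Nb j) • monoBL N1 Nw i else 0)) i := by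
    intro i
    simp only [TBL]
    split_ifs <;> first | omega | simp
  rw [Finset.sum_congr rfl (fun i _ => key i), Fin.sum_univ_eq_sum_range (fun i : ℕ =>
      (if i = j + 1 then pBL N1 N2 Nw j • monoBL N1 Nw i else 0)
        + (if i + 1 = j then qBL N1 N2 Nb j • monoBL N1 Nw i else 0)
        + (if i = j then (1 - pBL N1 N2 Nw j - qBL N1 N2 Nb j) • monoBL N1 Nw i else 0)),
    Finset.sum_add_distrib, Finset.sum_add_distrib]
  have hp : ∑ i ∈ range (Nw + 1), (if i = j + 1 then pBL N1 N2 Nw j • monoBL N1 Nw i else 0)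
      = pBL N1 N2 Nw j • monoBL N1 Nw (j + 1) := by
    rw [Finset.sum_ite_eq']
    split_ifs with h
    · rfl
    · have : j = Nw := by simp at h; omega
      simp [pBL, this]
  have hq : ∑ i ∈ range (Nw + 1), (if i + 1 = j then qBL N1 N2 Nb j • monoBL N1 Nw i else 0)
      = qBL N1 N2 Nb j • monoBL N1 Nw (j - 1) := by
    rcases j with _ | k
    · simp [qBL]
    · simp only [Nat.add_right_cancel_iff]
      rw [Finset.sum_ite_eq', if_pos (by simp; omega)]
      rfl
  rw [hp, hq, Finset.sum_ite_eq', if_pos (by simpa using hj)]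
  module

lemma lpdo_GBL (N1 N2 Nw Nb : ℕ) (hN1 : 1 ≤ N1) (hN2 : 1 ≤ N2) (hw1 : Nw ≤ N1)
    (c : Fin (Nw + 1) → ℝ) :
    lpdo Nb (GBL N1 Nw c) =
      ((N1 : ℝ) * N2) • (GBL N1 Nw ((TBL N1 N2 Nw Nb).mulVec c) - GBL N1 Nw c) := by
  have hT : GBL N1 Nw ((TBL N1 N2 Nw Nb).mulVec c) = ∑ j : Fin (Nw + 1), c j •
      ∑ i : Fin (Nw + 1), TBL N1 N2 Nw Nb i j • monoBL N1 Nw i := by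
    simp only [GBL_eq_sum, Matrix.mulVec, dotProduct, Finset.sum_smul, Finset.smul_sum]
    rw [Finset.sum_comm]
    simp only [smul_smul, mul_comm]
  rw [hT, GBL_eq_sum, map_sum, ← Finset.sum_sub_distrib, Finset.smul_sum]
  refine Finset.sum_congr rfl fun j _ => ?_
  rw [map_smul, lpdo_mono N1 N2 Nw Nb j hN1 hN2 hw1 (Nat.le_of_lt_succ j.2), sum_TBL_mono]
  module

/-- Equivalence of the matrix eigenproblem `T c = λ c` and the LPDO eigenproblem
`(x−yz) G_{yz} + y (x−yz) G_{xy} − N_b (x−yz) G_x = N1 N2 (λ−1) G`. -/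
theorem BL_matrix_LPDO_equivalence
    (N1 N2 Nw Nb N : ℕ)
    (hN1 : 1 ≤ N1) (hN2 : 1 ≤ N2) (hN : N = N1 + N2) (hwb : Nw + Nb = N)
    (hw1 : Nw ≤ N1) (hw2 : Nw ≤ N2)
    (c : Fin (Nw + 1) → ℝ) (lam : ℝ) :
    (TBL N1 N2 Nw Nb).mulVec c = lam • c ↔
      (X 0 - X 1 * X 2) * pderiv 1 (pderiv 2 (GBL N1 Nw c))
        + X 1 * (X 0 - X 1 * X 2) * pderiv 0 (pderiv 1 (GBL N1 Nw c))
        - MvPolynomial.C (Nb : ℝ) * (X 0 - X 1 * X 2) * pderiv 0 (GBL N1 Nw c)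
      = MvPolynomial.C ((N1 : ℝ) * N2 * (lam - 1)) * GBL N1 Nw c := by
  change _ ↔ lpdo Nb (GBL N1 Nw c) = _
  have h0 : (N1 : ℝ) * N2 ≠ 0 := by positivity
  have hlam : GBL N1 Nw (lam • c) = lam • GBL N1 Nw c := by
    simp only [GBL_eq_sum, Finset.smul_sum, Pi.smul_apply, smul_assoc]
  have hR : MvPolynomial.C ((N1 : ℝ) * N2 * (lam - 1)) * GBL N1 Nw c =
      ((N1 : ℝ) * N2) • (GBL N1 Nw (lam • c) - GBL N1 Nw c) := by
    rw [← smul_eq_C_mul, hlam]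
    module
  rw [lpdo_GBL N1 N2 Nw Nb hN1 hN2 hw1, hR, smul_right_inj h0, sub_left_inj,
    (GBL_injective N1 Nw).eq_iff]
end
end

section
/- Triangularizing change of variables for the Bernoulli–Laplace LPDO: let G ∈ ℝ[x,y,z] be any polynomial and define H ∈ ℝ[u,y,z] by H(u,y,z) = G(u+yz, y, z). Then the polynomial L[G] := (x−yz)·∂_y∂_z G + y(x−yz)·∂_x∂_y G − N_b·(x−yz)·∂_x G, after substituting x = u+yz, equals u·(∂_y∂_z H − z·∂_u∂_z H) − (N_b+1)·u·∂_u H. -/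
/-!
With `S = substBL`, the chain rule for `H = S G` gives `∂_u H = S G_x`, `∂_y H = S G_y + z S G_x`
and `∂_z H = S G_z + y S G_x`. Hence `∂_y - z ∂_u` intertwines with `∂_y` through `S`, and
applied to `∂_z H` it gives `S G_yz + S G_x + y S G_xy`. The middle term, produced by the factor
`y`, equals `∂_u H` and is cancelled by the shift from `N_b` to `N_b + 1`; the factor `x - yz` becomes `u`.
-/

open MvPolynomial

noncomputable section

/-- The substitution `x ↦ u + yz` (with `u` the first variable of the target ring),
`y ↦ y`, `z ↦ z`, as an algebra homomorphism of polynomial rings; it sends a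
polynomial `G(x,y,z)` to `H(u,y,z) = G(u+yz, y, z)`. -/
def substBL : MvPolynomial (Fin 3) ℝ →ₐ[ℝ] MvPolynomial (Fin 3) ℝ :=
  aeval (fun i : Fin 3 => if i = 0 then X 0 + X 1 * X 2 else X i)

lemma substBL_X (i : Fin 3) :
    substBL (X i) = if i = 0 then X 0 + X 1 * X 2 else X i := by
  simp [substBL]

/-- Chain rule for `substBL`, in the three coordinates simultaneously. -/
lemma pderiv_substBL (G : MvPolynomial (Fin 3) ℝ) :
    pderiv 0 (substBL G) = substBL (pderiv 0 G) ∧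
    pderiv 1 (substBL G) = substBL (pderiv 1 G) + X 2 * substBL (pderiv 0 G) ∧
    pderiv 2 (substBL G) = substBL (pderiv 2 G) + X 1 * substBL (pderiv 0 G) := by
  induction G using MvPolynomial.induction_on with
  | C a => simp [substBL]
  | add p q hp hq =>
    obtain ⟨h0, h1, h2⟩ := hp
    obtain ⟨k0, k1, k2⟩ := hq
    simp only [map_add, h0, h1, h2, k0, k1, k2]
    exact ⟨trivial, by ring, by ring⟩
  | mul_X p i hp =>
    obtain ⟨h0, h1, h2⟩ := hp
    simp only [map_mul, Derivation.leibniz, smul_eq_mul, map_add, h0, h1, h2, substBL_X]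
    fin_cases i <;> refine ⟨?_, ?_, ?_⟩ <;> simp [pderiv_X, Derivation.leibniz] <;> ring

lemma pderiv_zero_one_comm (G : MvPolynomial (Fin 3) ℝ) :
    pderiv 1 (pderiv 0 G) = pderiv 0 (pderiv 1 G) := by
  -- The commutator of two derivations is a derivation, and it vanishes on the variables.
  have h : ⁅pderiv (R := ℝ) (1 : Fin 3), pderiv (R := ℝ) (0 : Fin 3)⁆ = 0 := by
    refine MvPolynomial.derivation_ext fun i => ?_
    fin_cases i <;> simp [Derivation.commutator_apply, pderiv_X]
  have := DFunLike.congr_fun h G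
  rwa [Derivation.commutator_apply, Derivation.zero_apply, sub_eq_zero] at this

/-- Triangularizing change of variables for the BL LPDO: substituting `x = u + yz`
into `L[G] = (x−yz) G_{yz} + y (x−yz) G_{xy} − N_b (x−yz) G_x` yields
`u (H_{yz} − z H_{uz}) − (N_b+1) u H_u` where `H(u,y,z) = G(u+yz,y,z)`. -/
theorem BL_LPDO_change_of_variables (Nb : ℕ) (G : MvPolynomial (Fin 3) ℝ) :
    substBL ((X 0 - X 1 * X 2) * pderiv 1 (pderiv 2 G)
        + X 1 * (X 0 - X 1 * X 2) * pderiv 0 (pderiv 1 G)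
        - MvPolynomial.C (Nb : ℝ) * (X 0 - X 1 * X 2) * pderiv 0 G)
      = X 0 * (pderiv 1 (pderiv 2 (substBL G)) - X 2 * pderiv 0 (pderiv 2 (substBL G)))
        - MvPolynomial.C ((Nb : ℝ) + 1) * X 0 * pderiv 0 (substBL G) := by
  have hC (a : ℝ) : substBL (C a) = C a := by simp [substBL]
  have h0 (P) := (pderiv_substBL P).1
  have h1 (P) := (pderiv_substBL P).2.1
  have h2 (P) := (pderiv_substBL P).2.2
  have d11 : pderiv 1 (X 1 : MvPolynomial (Fin 3) ℝ) = 1 := pderiv_X_self 1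
  have d01 : pderiv 0 (X 1 : MvPolynomial (Fin 3) ℝ) = 0 := pderiv_X_of_ne (by decide)
  have s0 : substBL (X 0) = X 0 + X 1 * X 2 := by simp [substBL_X]
  have s1 : substBL (X 1) = X 1 := by simp [substBL_X]
  have s2 : substBL (X 2) = X 2 := by simp [substBL_X]
  simp only [h0, h2, map_add, map_sub, map_mul, Derivation.leibniz, smul_eq_mul, h1, d11, d01,
    hC, s0, s1, s2, pderiv_zero_one_comm, map_one]
  ring
end
end

section
/- There exists a constant C > 0 such that for all n ≥ 1, Σ_{i=0}^{n} √(π_i) ≤ C·n^{1/4}, where π_i = C(n,i)²/C(2n,n) is the balanced hypergeometric stationary distribution. -/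
/-!
Since `√(π_i) = C(n,i) / √C(2n,n)`, the row sum `∑ C(n,i) = 2^n` gives
`∑ √(π_i) = 2^n / √C(2n,n)`. The fourth power of this is `16^n / C(2n,n)^2`, which is at most `4n`
by the lower bound `16^n ≤ 4n C(2n,n)^2` on the central binomial coefficient.
-/

open Finset

noncomputable section

/-- The balanced Bernoulli–Laplace transition matrix (`N1 = N2 = N_w = N_b = n`):
nonzero entries `T_{j+1,j} = (n−j)²/n²`, `T_{j−1,j} = j²/n²`,
`T_{j,j} = 1 − ((n−j)² + j²)/n²`. -/
def TB (n : ℕ) : Matrix (Fin (n + 1)) (Fin (n + 1)) ℝ :=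
  fun i j =>
    if (i : ℕ) = (j : ℕ) + 1 then ((n : ℝ) - j) ^ 2 / (n : ℝ) ^ 2
    else if (i : ℕ) + 1 = (j : ℕ) then (j : ℝ) ^ 2 / (n : ℝ) ^ 2
    else if (i : ℕ) = (j : ℕ) then 1 - (((n : ℝ) - j) ^ 2 + (j : ℝ) ^ 2) / (n : ℝ) ^ 2
    else 0

/-- The balanced hypergeometric stationary distribution `π_i = C(n,i)² / C(2n,n)`. -/
def piB (n : ℕ) (i : ℕ) : ℝ :=
  (Nat.choose n i : ℝ) ^ 2 / (Nat.choose (2 * n) n : ℝ)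

/-- The sharp-order lower bound `C(2n,n) ≥ 4^n / (2√n)`, squared. The induction uses
`(n+1) C(2n+2,n+1) = 2(2n+1) C(2n,n)` and `4n(n+1) ≤ (2n+1)²`. -/
theorem sixteen_pow_le_mul_centralBinom_sq (n : ℕ) (hn : 1 ≤ n) :
    16 ^ n ≤ 4 * n * n.centralBinom ^ 2 := by
  induction n, hn using Nat.le_induction with
  | base => simp [Nat.centralBinom]
  | succ n hn ih =>
    have h := Nat.succ_mul_centralBinom_succ n
    refine Nat.le_of_mul_le_mul_left ?_ (Nat.succ_pos n)
    calc (n + 1) * 16 ^ (n + 1) = 16 * (n + 1) * 16 ^ n := by ring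
      _ ≤ 16 * (n + 1) * (4 * n * n.centralBinom ^ 2) := Nat.mul_le_mul_left _ ih
      _ ≤ 4 * (2 * (2 * n + 1) * n.centralBinom) ^ 2 := by
        nlinarith [Nat.zero_le (n.centralBinom ^ 2)]
      _ = 4 * ((n + 1) * (n + 1).centralBinom) ^ 2 := by rw [h]
      _ = (n + 1) * (4 * (n + 1) * (n + 1).centralBinom ^ 2) := by ring

theorem sum_sqrt_piB (n : ℕ) :
    ∑ i ∈ Finset.range (n + 1), Real.sqrt (piB n i)
      = 2 ^ n / Real.sqrt (n.centralBinom : ℝ) := by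
  have h : ∀ i, Real.sqrt (piB n i) = (n.choose i : ℝ) / Real.sqrt (n.centralBinom : ℝ) := by
    intro i
    rw [piB, Real.sqrt_div (sq_nonneg _), Real.sqrt_sq (Nat.cast_nonneg _),
      Nat.centralBinom_eq_two_mul_choose]
  simp_rw [h]
  rw [← Finset.sum_div]
  congr 1
  exact_mod_cast Nat.sum_range_choose n

/-- `Σ_{i=0}^n √(π_i) = O(n^{1/4})` for the balanced stationary distribution. -/
theorem BL_sqrt_pi_sum_bound :
    ∃ C : ℝ, 0 < C ∧ ∀ n : ℕ, 1 ≤ n →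
      ∑ i ∈ Finset.range (n + 1), Real.sqrt (piB n i)
        ≤ C * (n : ℝ) ^ ((1 : ℝ) / 4) := by
  refine ⟨2, two_pos, fun n hn => ?_⟩
  rw [sum_sqrt_piB]
  have hc : (0 : ℝ) < n.centralBinom := by exact_mod_cast n.centralBinom_pos
  have hb : (16 : ℝ) ^ n ≤ 4 * n * (n.centralBinom : ℝ) ^ 2 := by
    exact_mod_cast sixteen_pow_le_mul_centralBinom_sq n hn
  refine le_of_pow_le_pow_left₀ (n := 4) (by norm_num) (by positivity) ?_
  have h1 : ((n : ℝ) ^ ((1 : ℝ) / 4)) ^ 4 = n := by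
    rw [← Real.rpow_natCast, ← Real.rpow_mul (Nat.cast_nonneg n)]
    norm_num
  have h2 : Real.sqrt (n.centralBinom : ℝ) ^ 4 = (n.centralBinom : ℝ) ^ 2 := by
    rw [show 4 = 2 * 2 from rfl, pow_mul, Real.sq_sqrt hc.le]
  have h3 : ((2 : ℝ) ^ n) ^ 4 = 16 ^ n := by
    rw [← pow_mul, mul_comm, pow_mul]
    norm_num
  rw [div_pow, mul_pow, h1, h2, h3, div_le_iff₀ (by positivity)]
  have : (0 : ℝ) ≤ n * (n.centralBinom : ℝ) ^ 2 := by positivity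
  linarith
end
end

section
/- Equivalence of the Voter-model matrix eigenproblem and its LPDO eigenproblem: let N ≥ 2, let T_V be the (N+1)×(N+1) real matrix with nonzero entries T_V[j+1,j] = T_V[j−1,j] = p_j = j(N−j)/(N(N−1)) shifted appropriately, i.e. (T_V·a)_j = p_{j−1}a_{j−1} + (1−2p_j)a_j + p_{j+1}a_{j+1} with p_j = j(N−j)/(N(N−1)). For any real vector c = (c_0,...,c_N) and λ ∈ ℝ, let G = Σ_{j=0}^{N} c_j·x^j·y^{N−j} ∈ ℝ[x,y]. Then T_V·c = λ·c if and only if (x−y)²·∂_x∂_y G = N(N−1)(λ−1)·G as polynomials. -/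
/-!
The operator `(x - y)² ∂_x ∂_y` sends `x^j y^(N-j)` to
`j (N-j) (x^(j+1) y^(N-j-1) - 2 x^j y^(N-j) + x^(j-1) y^(N-j+1))`, whose coefficients are exactly
`N (N-1)` times the `j`-th column of `T_V - 1`; at `j = 0` and `j = N` both sides vanish because
`p_0 = p_N = 0`. By linearity `(x - y)² ∂_x ∂_y G_c = N (N-1) (G_{T_V c} - G_c)` (`GV_LPDO`).
Since `N (N-1) ≠ 0` and `c ↦ G_c` is linear and injective (`GV_injective`), the two eigenproblems
coincide.
-/


open Finset MvPolynomial

noncomputable section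

/-- Transition probability `p_j = j (N-j) / (N (N-1))` of the Voter model. -/
def pV (N : ℕ) (j : ℕ) : ℝ := (j : ℝ) * ((N : ℝ) - j) / ((N : ℝ) * ((N : ℝ) - 1))

/-- The Voter model transition matrix, with `(T_V a)_j = p_{j-1} a_{j-1}
+ (1 - 2 p_j) a_j + p_{j+1} a_{j+1}`; its nonzero entries are
`T_V[j+1,j] = T_V[j-1,j] = p_j` and `T_V[j,j] = 1 - 2 p_j`. -/
def TV (N : ℕ) : Matrix (Fin (N + 1)) (Fin (N + 1)) ℝ :=
  fun i j =>
    if (i : ℕ) = (j : ℕ) + 1 then pV N j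
    else if (i : ℕ) + 1 = (j : ℕ) then pV N j
    else if (i : ℕ) = (j : ℕ) then 1 - 2 * pV N j
    else 0

/-- The homogeneous polynomial `G = Σ_j c_j x^j y^{N-j}` encoding a vector `c`. -/
def GV (N : ℕ) (c : Fin (N + 1) → ℝ) : MvPolynomial (Fin 2) ℝ :=
  ∑ j : Fin (N + 1), MvPolynomial.C (c j) * X 0 ^ (j : ℕ) * X 1 ^ (N - (j : ℕ))

theorem GV_sub (N : ℕ) (a b : Fin (N + 1) → ℝ) : GV N (a - b) = GV N a - GV N b := by
  simp [GV, sub_mul, Finset.sum_sub_distrib]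

theorem GV_smul (N : ℕ) (r : ℝ) (a : Fin (N + 1) → ℝ) : GV N (r • a) = C r * GV N a := by
  simp [GV, Finset.mul_sum, mul_assoc]

theorem GV_injective (N : ℕ) : Function.Injective (GV N) := by
  have key : ∀ (a : Fin (N + 1) → ℝ) (i : Fin (N + 1)),
      coeff (Finsupp.single 0 (i : ℕ) + Finsupp.single 1 (N - (i : ℕ))) (GV N a) = a i := by
    intro a i
    have hmon : ∀ j : Fin (N + 1),
        (C (a j) * X 0 ^ (j : ℕ) * X 1 ^ (N - (j : ℕ)) : MvPolynomial (Fin 2) ℝ)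
          = monomial (Finsupp.single 0 (j : ℕ) + Finsupp.single 1 (N - (j : ℕ))) (a j) := by
      intro j
      rw [X_pow_eq_monomial, X_pow_eq_monomial, C_mul_monomial, monomial_mul]
      simp
    simp only [GV, hmon, coeff_sum, coeff_monomial]
    rw [Finset.sum_eq_single i]
    · simp
    · intro j _ hj
      rw [if_neg]
      intro h
      apply hj
      have h0 := DFunLike.congr_fun h 0
      simp at h0
      exact Fin.ext h0
    · simp
  intro a b h
  funext i
  rw [← key a i, ← key b i, h]

/-- The polynomial of the `j`-th column of `T_V - 1`, scaled by `N (N-1)`, is the image of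
`x^j y^(N-j)` under `(x - y)² ∂_x ∂_y`. -/
theorem column_LPDO (N : ℕ) (hN : 2 ≤ N) (j : Fin (N + 1)) :
    (X 0 - X 1) ^ 2 * pderiv 0 (pderiv 1
        (X 0 ^ (j : ℕ) * X 1 ^ (N - (j : ℕ)) : MvPolynomial (Fin 2) ℝ))
      = C ((N : ℝ) * ((N : ℝ) - 1)) * (GV N (fun i => TV N i j)
          - X 0 ^ (j : ℕ) * X 1 ^ (N - (j : ℕ))) := by
  obtain ⟨j, hj⟩ := j
  have hN' : (2 : ℝ) ≤ N := by exact_mod_cast hN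
  have hNN : (N : ℝ) * ((N : ℝ) - 1) ≠ 0 := by
    apply mul_ne_zero <;> linarith
  have hp : (N : ℝ) * ((N : ℝ) - 1) * pV N j = j * (N - j) := by
    unfold pV
    exact mul_div_cancel₀ _ hNN
  have hT : ∀ i : Fin (N + 1), TV N i ⟨j, hj⟩ =
      (if (i : ℕ) = j + 1 then pV N j else 0) + (if (i : ℕ) + 1 = j then pV N j else 0)
        + (if (i : ℕ) = j then 1 - 2 * pV N j else 0) := by
    intro i
    simp only [TV]
    split_ifs <;> first | omega | simp
  have hG : GV N (fun i => TV N i ⟨j, hj⟩) = ∑ i ∈ Finset.range (N + 1),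
      ((if i = j + 1 then C (pV N j) * X 0 ^ i * X 1 ^ (N - i) else 0)
        + (if i + 1 = j then C (pV N j) * X 0 ^ i * X 1 ^ (N - i) else 0)
        + (if i = j then C (1 - 2 * pV N j) * X 0 ^ i * X 1 ^ (N - i) else 0)) := by
    rw [← Fin.sum_univ_eq_sum_range (fun i : ℕ =>
      ((if i = j + 1 then C (pV N j) * X 0 ^ i * X 1 ^ (N - i) else 0)
        + (if i + 1 = j then C (pV N j) * X 0 ^ i * X 1 ^ (N - i) else 0)
        + (if i = j then C (1 - 2 * pV N j) * X 0 ^ i * X 1 ^ (N - i) else 0) :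
        MvPolynomial (Fin 2) ℝ))]
    unfold GV
    refine Finset.sum_congr rfl fun i _ => ?_
    simp only [hT]
    simp only [C_add, add_mul]
    split_ifs <;> simp
  rw [hG]
  simp only [Finset.sum_add_distrib]
  by_cases hb : j = 0 ∨ j = N
  · -- At the absorbing states `p_j = 0`, and one of the two derivatives kills the monomial.
    have hp0 : pV N j = 0 := by
      rcases hb with h | h <;> simp [pV, h]
    rcases hb with rfl | rfl <;> simp [hp0, Derivation.leibniz_pow]
  · obtain ⟨a, rfl⟩ : ∃ a, j = a + 1 := ⟨j - 1, by omega⟩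
    obtain ⟨b, rfl⟩ : ∃ b, N = a + b + 2 := ⟨N - a - 2, by omega⟩
    simp only [add_left_inj, Finset.sum_ite_eq', Finset.mem_range]
    rw [if_pos (by omega), if_pos (by omega), if_pos (by omega)]
    rw [show a + b + 2 - (a + 1) = b + 1 by omega, show a + b + 2 - (a + 1 + 1) = b by omega,
      show a + b + 2 - a = b + 2 by omega]
    have hd : pderiv 0 (pderiv 1 (X 0 ^ (a + 1) * X 1 ^ (b + 1) : MvPolynomial (Fin 2) ℝ))
        = C (((a : ℝ) + 1) * (b + 1)) * X 0 ^ a * X 1 ^ b := by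
      simp [Derivation.leibniz, Derivation.leibniz_pow]
      ring
    have hp' : (C (((a + b + 2 : ℕ) : ℝ) * (((a + b + 2 : ℕ) : ℝ) - 1)) : MvPolynomial (Fin 2) ℝ)
        * C (pV (a + b + 2) (a + 1)) = C (((a : ℝ) + 1) * (b + 1)) := by
      rw [← C_mul, hp]
      congr 1
      push_cast
      ring
    have h2 : (C (1 - 2 * pV (a + b + 2) (a + 1)) : MvPolynomial (Fin 2) ℝ)
        = 1 - 2 * C (pV (a + b + 2) (a + 1)) := by
      rw [two_mul, two_mul, C_sub, C_add, C_1]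
    rw [hd, ← hp', h2]
    ring

theorem GV_LPDO (N : ℕ) (hN : 2 ≤ N) (c : Fin (N + 1) → ℝ) :
    (X 0 - X 1) ^ 2 * pderiv 0 (pderiv 1 (GV N c))
      = C ((N : ℝ) * ((N : ℝ) - 1)) * (GV N ((TV N).mulVec c) - GV N c) := by
  have hcol : GV N ((TV N).mulVec c) = ∑ j, C (c j) * GV N (fun i => TV N i j) := by
    simp only [GV, Matrix.mulVec, dotProduct, map_sum, Finset.sum_mul, Finset.mul_sum]
    rw [Finset.sum_comm]
    refine Finset.sum_congr rfl fun j _ => Finset.sum_congr rfl fun i _ => ?_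
    rw [C_mul]
    ring
  have hc : GV N c = ∑ j : Fin (N + 1), C (c j) * (X 0 ^ (j : ℕ) * X 1 ^ (N - (j : ℕ))) := by
    simp only [GV, mul_assoc]
  rw [hcol, hc, ← Finset.sum_sub_distrib, map_sum, map_sum, Finset.mul_sum, Finset.mul_sum]
  refine Finset.sum_congr rfl fun j _ => ?_
  rw [pderiv_C_mul, pderiv_C_mul, mul_left_comm,
    column_LPDO N hN j]
  ring

/-- Equivalence of the Voter-model matrix eigenproblem `T_V c = λ c` and the LPDO
eigenproblem `(x−y)² G_{xy} = N (N−1) (λ−1) G`. -/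
theorem Voter_matrix_LPDO_equivalence
    (N : ℕ) (hN : 2 ≤ N) (c : Fin (N + 1) → ℝ) (lam : ℝ) :
    (TV N).mulVec c = lam • c ↔
      (X 0 - X 1) ^ 2 * pderiv 0 (pderiv 1 (GV N c))
        = MvPolynomial.C ((N : ℝ) * ((N : ℝ) - 1) * (lam - 1)) * GV N c := by
  have hN' : (2 : ℝ) ≤ N := by exact_mod_cast hN
  have hNN : (N : ℝ) * ((N : ℝ) - 1) ≠ 0 := by
    apply mul_ne_zero <;> linarith
  have hC : (C ((N : ℝ) * ((N : ℝ) - 1)) : MvPolynomial (Fin 2) ℝ) ≠ 0 := by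
    rwa [Ne, C_eq_zero]
  have hR : C ((N : ℝ) * ((N : ℝ) - 1) * (lam - 1)) * GV N c
      = C ((N : ℝ) * ((N : ℝ) - 1)) * (GV N (lam • c) - GV N c) := by
    rw [GV_smul, C_mul, C_sub, C_1]
    ring
  rw [GV_LPDO N hN c, hR, mul_right_inj' hC, sub_left_inj, (GV_injective N).eq_iff]
end
end
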